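/- Fix integers d,e ≥ 1 and n ≥ 0, and consider the equivalence relation on T_n given by t ~ t' iff ld(t) ~^d ld(t') and rd(t) ~^e rd(t'). The cardinality of every equivalence class is a product of Catalan numbers C_{m_0−1}·C_{m_1−1}⋯C_{m_r−1} for some r ≥ 0 and positive integers m_0,…,m_r with m_0 + m_1 + ⋯ + m_r = n+1. -/

import Mathlib

/-- Full binary trees (every internal node has exactly two children). -/
inductive BTree : Type
  | leaf : BTree
  | node : BTree → BTree → BTree
deriving DecidableEq

namespace BTree

/-- Number of leaves of a full binary tree. -/
def numLeaves : BTree → ℕ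
  | leaf => 1
  | node l r => l.numLeaves + r.numLeaves

/-- The list of pairs (left depth, right depth) of the leaves, in preorder. -/
def leafDepths : BTree → List (ℕ × ℕ)
  | leaf => [(0, 0)]
  | node l r =>
      (l.leafDepths.map fun p => (p.1 + 1, p.2)) ++ (r.leafDepths.map fun p => (p.1, p.2 + 1))

/-- The left depth sequence `ld(t)` of the leaves of `t`, in preorder. -/
def ld (t : BTree) : List ℕ := t.leafDepths.map Prod.fst

/-- The right depth sequence `rd(t)` of the leaves of `t`, in preorder. -/
def rd (t : BTree) : List ℕ := t.leafDepths.map Prod.snd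

end BTree

/-- `b ~^d c` : the sequences have equal length and agree at every position where
either entry is `< d`. -/
def DepthEq (d : ℕ) : List ℕ → List ℕ → Prop :=
  List.Forall₂ (fun a b => min a b < d → a = b)

/-- `b ~_k c` : entrywise congruence mod `k` (and equal length). -/
def ModListEq (k : ℕ) : List ℕ → List ℕ → Prop :=
  List.Forall₂ (fun a b => a % k = b % k)

/-- The relation `t ~ t'` iff `ld(t) ~^d ld(t')` and `rd(t) ~^e rd(t')`. -/
def DeRel (d e : ℕ) (t t' : BTree) : Prop :=
  DepthEq d t.ld t'.ld ∧ DepthEq e t.rd t'.rd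

/-- The relation `t ~ t'` iff `ld(t) ~_k^d ld(t')` (i.e. `ld(t) ~_k ld(t')` and
`ld(t) ~^d ld(t')`). -/
def DkRel (d k : ℕ) (t t' : BTree) : Prop :=
  ModListEq k t.ld t'.ld ∧ DepthEq d t.ld t'.ld

/-- `T_n`: full binary trees with `n+1` leaves. -/
def Tn (n : ℕ) : Type := {t : BTree // t.numLeaves = n + 1}

/-- `C^{d,e}_n`: the number of equivalence classes of the relation `DeRel d e` on `T_n`. -/
noncomputable def Cde (d e n : ℕ) : ℕ :=
  Nat.card (Quot (fun t t' : Tn n => DeRel d e t.1 t'.1))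

/-- `C^d_{k,n}`: the number of equivalence classes of `ld(t) ~_k^d ld(t')` on `T_n`. -/
noncomputable def Cdk (d k n : ℕ) : ℕ :=
  Nat.card (Quot (fun t t' : Tn n => DkRel d k t.1 t'.1))

namespace BTree

lemma numLeaves_pos (t : BTree) : 0 < t.numLeaves := by
  induction t with
  | leaf => simp [numLeaves]
  | node l r ihl ihr => simp [numLeaves]; omega

lemma length_leafDepths (t : BTree) : t.leafDepths.length = t.numLeaves := by
  induction t with
  | leaf => simp [numLeaves, leafDepths]
  | node l r ihl ihr => simp [numLeaves, leafDepths, ihl, ihr]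

lemma length_ld (t : BTree) : t.ld.length = t.numLeaves := by
  simp [ld, length_leafDepths]

lemma length_rd (t : BTree) : t.rd.length = t.numLeaves := by
  simp [rd, length_leafDepths]

lemma ld_node (l r : BTree) : (node l r).ld = l.ld.map (· + 1) ++ r.ld := by
  simp [ld, leafDepths, Function.comp_def]

lemma rd_node (l r : BTree) : (node l r).rd = l.rd ++ r.rd.map (· + 1) := by
  simp [rd, leafDepths, Function.comp_def]

/-- Only the last leaf has left depth zero. -/
lemma ld_shape (t : BTree) : ∃ x : List ℕ, t.ld = x ++ [0] ∧ ∀ a ∈ x, 1 ≤ a := by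
  induction t with
  | leaf => exact ⟨[], by simp [ld, leafDepths]⟩
  | node l r ihl ihr =>
    obtain ⟨y, hy, hy'⟩ := ihr
    refine ⟨l.ld.map (· + 1) ++ y, by simp [ld_node, hy], ?_⟩
    intro a ha
    rcases List.mem_append.1 ha with h | h
    · obtain ⟨b, _, rfl⟩ := List.mem_map.1 h
      omega
    · exact hy' a h

/-- Only the first leaf has right depth zero. -/
lemma rd_shape (t : BTree) : ∃ x : List ℕ, t.rd = 0 :: x ∧ ∀ a ∈ x, 1 ≤ a := by
  induction t with
  | leaf => exact ⟨[], by simp [rd, leafDepths]⟩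
  | node l r ihl ihr =>
    obtain ⟨y, hy, hy'⟩ := ihl
    refine ⟨y ++ r.rd.map (· + 1), by simp [rd_node, hy], ?_⟩
    intro a ha
    rcases List.mem_append.1 ha with h | h
    · exact hy' a h
    · obtain ⟨b, _, rfl⟩ := List.mem_map.1 h
      omega

/-- Translation to Mathlib's binary trees. -/
def toTree : BTree → BinaryTree Unit
  | leaf => BinaryTree.nil
  | node l r => BinaryTree.node () l.toTree r.toTree

/-- Translation from Mathlib's binary trees. -/
def ofTree : BinaryTree Unit → BTree
  | BinaryTree.nil => leaf
  | BinaryTree.node _ l r => node (ofTree l) (ofTree r)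

/-- The equivalence with Mathlib's binary trees. -/
def equivTree : BTree ≃ BinaryTree Unit where
  toFun := toTree
  invFun := ofTree
  left_inv t := by induction t <;> simp_all [toTree, ofTree]
  right_inv t := by induction t <;> simp_all [toTree, ofTree]

lemma numLeaves_eq (t : BTree) : t.numLeaves = t.toTree.numNodes + 1 := by
  induction t with
  | leaf => simp [numLeaves, toTree]
  | node l r ihl ihr => simp [numLeaves, toTree, BinaryTree.numNodes, ihl, ihr]; omega

lemma card_numLeaves (n : ℕ) : Nat.card {t : BTree // t.numLeaves = n + 1} = catalan n := by
  rw [← BinaryTree.treesOfNumNodesEq_card_eq_catalan, ← Nat.card_eq_finsetCard]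
  refine Nat.card_congr (equivTree.subtypeEquiv fun t => ?_)
  rw [BinaryTree.mem_treesOfNumNodesEq, numLeaves_eq]
  simp [equivTree]

end BTree

open BTree

lemma depthEq_succ (d : ℕ) (x y : List ℕ) :
    DepthEq d (x.map (· + 1)) (y.map (· + 1)) ↔ DepthEq (d - 1) x y := by
  unfold DepthEq
  rw [List.forall₂_map_left_iff, List.forall₂_map_right_iff]
  have : (fun a b : ℕ => min (a + 1) (b + 1) < d → a + 1 = b + 1) =
      fun a b => min a b < d - 1 → a = b := by
    funext a b
    apply propext
    constructor <;> intro h h' <;> have := h (by omega) <;> omega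
  rw [this]

lemma depthEq_append (d : ℕ) {x x' y y' : List ℕ} (hx : x.length = x'.length) :
    DepthEq d (x ++ y) (x' ++ y') ↔ DepthEq d x x' ∧ DepthEq d y y' := by
  unfold DepthEq
  constructor
  · intro h
    have h1 := List.forall₂_take_append _ _ _ h
    have h2 := List.forall₂_drop_append _ _ _ h
    rw [← hx] at h1 h2
    simp only [List.take_left', List.drop_left'] at h1 h2
    exact ⟨h1, h2⟩
  · rintro ⟨h1, h2⟩
    exact List.rel_append h1 h2

lemma depthEq_triv (d : ℕ) (hd : d ≤ 1) {x y : List ℕ} (h : x.length = y.length)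
    (hx : ∀ a ∈ x, 1 ≤ a) (hy : ∀ a ∈ y, 1 ≤ a) : DepthEq d x y := by
  refine List.forall₂_iff_zip.2 ⟨h, ?_⟩
  intro a b hab hlt
  have h1 := hx a (List.of_mem_zip hab).1
  have h2 := hy b (List.of_mem_zip hab).2
  omega

lemma length_of_depthEq (d : ℕ) (hd : 2 ≤ d) {y y' : List ℕ} :
    ∀ {x x' : List ℕ}, (∀ a ∈ x, 2 ≤ a) → (∀ a ∈ x', 2 ≤ a) →
      DepthEq d (x ++ 1 :: y) (x' ++ 1 :: y') → x.length = x'.length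
  | [], [], _, _, _ => rfl
  | [], b :: x', _, hx', h => by
    have h1 := (List.forall₂_cons.1 h).1
    have h2 := hx' b (by simp)
    have := h1 (by omega)
    omega
  | a :: x, [], hx, _, h => by
    have h1 := (List.forall₂_cons.1 h).1
    have h2 := hx a (by simp)
    have := h1 (by omega)
    omega
  | a :: x, b :: x', hx, hx', h => by
    have h1 := (List.forall₂_cons.1 h).2
    have := length_of_depthEq d hd (fun a ha => hx a (by simp [ha]))
      (fun a ha => hx' a (by simp [ha])) h1
    simp [this]

lemma deRel_numLeaves {d e : ℕ} {t t' : BTree} (h : DeRel d e t t') :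
    t.numLeaves = t'.numLeaves := by
  have := List.Forall₂.length_eq h.1
  rwa [length_ld, length_ld] at this

lemma deRel_small {d e : ℕ} (hd : d ≤ 1) (he : e ≤ 1) (t t' : BTree) :
    DeRel d e t t' ↔ t'.numLeaves = t.numLeaves := by
  refine ⟨fun h => (deRel_numLeaves h).symm, fun h => ⟨?_, ?_⟩⟩
  · obtain ⟨x, hx, hx1⟩ := ld_shape t
    obtain ⟨y, hy, hy1⟩ := ld_shape t'
    have hl : x.length = y.length := by
      rw [← length_ld, ← length_ld, hx, hy] at h
      simpa using h.symm
    rw [hx, hy, depthEq_append d hl]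
    exact ⟨depthEq_triv d hd hl hx1 hy1, List.Forall₂.cons (fun _ => rfl) List.Forall₂.nil⟩
  · obtain ⟨x, hx, hx1⟩ := rd_shape t
    obtain ⟨y, hy, hy1⟩ := rd_shape t'
    have hl : x.length = y.length := by
      rw [← length_rd, ← length_rd, hx, hy] at h
      simpa using h.symm
    rw [hx, hy]
    exact List.Forall₂.cons (fun _ => rfl) (depthEq_triv e he hl hx1 hy1)

lemma deRel_node_left {d e : ℕ} (hde : 2 ≤ d ∨ 2 ≤ e) {l r l' r' : BTree}
    (h : DeRel d e (node l r) (node l' r')) : l.numLeaves = l'.numLeaves := by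
  have hn := deRel_numLeaves h
  simp only [numLeaves] at hn
  rcases hde with hd | he
  · have h1 := h.1
    obtain ⟨x, hx, hx1⟩ := ld_shape l
    obtain ⟨y, hy, hy1⟩ := ld_shape l'
    rw [ld_node, ld_node, hx, hy] at h1
    simp only [List.map_append, List.map_cons, List.map_nil, List.append_assoc,
      List.cons_append, List.nil_append, zero_add] at h1
    have := length_of_depthEq d hd (by simpa using hx1) (by simpa using hy1) h1
    rw [← length_ld, ← length_ld, hx, hy]
    simpa using this
  · have h1 := h.2
    obtain ⟨x, hx, hx1⟩ := rd_shape r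
    obtain ⟨y, hy, hy1⟩ := rd_shape r'
    rw [rd_node, rd_node, hx, hy] at h1
    have h2 := List.forall₂_reverse_iff.2 h1
    simp only [List.map_cons, List.reverse_append, List.reverse_cons, List.append_assoc,
      List.cons_append, List.nil_append, zero_add] at h2
    have := length_of_depthEq e he (by simpa using hx1) (by simpa using hy1) h2
    have hr : r.numLeaves = r'.numLeaves := by
      rw [← length_rd, ← length_rd, hx, hy]
      simpa using this
    omega

lemma deRel_node {d e : ℕ} (hde : 2 ≤ d ∨ 2 ≤ e) (l r l' r' : BTree) :
    DeRel d e (node l r) (node l' r') ↔ DeRel (d - 1) e l l' ∧ DeRel d (e - 1) r r' := by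
  have key : l.numLeaves = l'.numLeaves → (DeRel d e (node l r) (node l' r') ↔
      DeRel (d - 1) e l l' ∧ DeRel d (e - 1) r r') := by
    intro h
    unfold DeRel
    rw [ld_node, ld_node, rd_node, rd_node,
      depthEq_append d (by simpa [length_ld] using h),
      depthEq_append e (by simpa [length_rd] using h), depthEq_succ, depthEq_succ]
    tauto
  exact ⟨fun h => (key (deRel_node_left hde h)).1 h,
    fun h => (key (deRel_numLeaves h.1)).2 h⟩

lemma card_node {d e : ℕ} (hde : 2 ≤ d ∨ 2 ≤ e) (l r : BTree) :
    Nat.card {t' : BTree // DeRel d e (node l r) t'} =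
      Nat.card {t' : BTree // DeRel (d - 1) e l t'} *
        Nat.card {t' : BTree // DeRel d (e - 1) r t'} := by
  rw [← Nat.card_prod]
  symm
  refine Nat.card_congr (Equiv.ofBijective
    (fun p => ⟨node p.1.1 p.2.1, (deRel_node hde _ _ _ _).2 ⟨p.1.2, p.2.2⟩⟩) ⟨?_, ?_⟩)
  · rintro ⟨⟨a, ha⟩, ⟨b, hb⟩⟩ ⟨⟨a', ha'⟩, ⟨b', hb'⟩⟩ h
    simpa using h
  · rintro ⟨t', ht'⟩
    cases t' with
    | leaf =>
      have := deRel_numLeaves ht'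
      have h1 := numLeaves_pos l
      have h2 := numLeaves_pos r
      simp only [numLeaves] at this
      omega
    | node a b =>
      have h := (deRel_node hde _ _ _ _).1 ht'
      exact ⟨⟨⟨a, h.1⟩, ⟨b, h.2⟩⟩, rfl⟩

lemma card_small {d e : ℕ} (t : BTree) (h : ∀ t', DeRel d e t t' ↔ t'.numLeaves = t.numLeaves) :
    Nat.card {t' : BTree // DeRel d e t t'} = catalan (t.numLeaves - 1) := by
  rw [← card_numLeaves, Nat.sub_add_cancel (numLeaves_pos t)]
  exact Nat.card_congr (Equiv.subtypeEquivRight h)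

lemma main_aux (t : BTree) : ∀ d e : ℕ,
    ∃ L : List ℕ, L ≠ [] ∧ (∀ m ∈ L, 0 < m) ∧ L.sum = t.numLeaves ∧
      Nat.card {t' : BTree // DeRel d e t t'} = (L.map fun m => catalan (m - 1)).prod := by
  have base : ∀ (t : BTree) (d e : ℕ), (∀ t', DeRel d e t t' ↔ t'.numLeaves = t.numLeaves) →
      ∃ L : List ℕ, L ≠ [] ∧ (∀ m ∈ L, 0 < m) ∧ L.sum = t.numLeaves ∧
        Nat.card {t' : BTree // DeRel d e t t'} = (L.map fun m => catalan (m - 1)).prod := by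
    intro t d e h
    exact ⟨[t.numLeaves], by simp, by simpa using numLeaves_pos t, by simp,
      by simpa using card_small t h⟩
  induction t with
  | leaf =>
    intro d e
    refine base _ d e fun t' => ⟨fun h => (deRel_numLeaves h).symm, fun h => ?_⟩
    cases t' with
    | leaf =>
      exact ⟨List.Forall₂.cons (fun _ => rfl) List.Forall₂.nil,
        List.Forall₂.cons (fun _ => rfl) List.Forall₂.nil⟩
    | node a b =>
      have h1 := numLeaves_pos a
      have h2 := numLeaves_pos b
      simp only [numLeaves] at h
      omega
  | node l r ihl ihr =>
    intro d e
    by_cases hde : 2 ≤ d ∨ 2 ≤ e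
    · obtain ⟨L, hL, hL1, hL2, hL3⟩ := ihl (d - 1) e
      obtain ⟨M, hM, hM1, hM2, hM3⟩ := ihr d (e - 1)
      refine ⟨L ++ M, by simp [hL], ?_, by simp [hL2, hM2, numLeaves], ?_⟩
      · intro m hm
        rcases List.mem_append.1 hm with h | h
        · exact hL1 m h
        · exact hM1 m h
      · rw [card_node hde, hL3, hM3, List.map_append, List.prod_append]
    · exact base _ d e (deRel_small (by omega) (by omega) _)

/-- for `d,e ≥ 1`, the cardinality of every equivalence class of the relation
`t ~ t'` iff `ld(t) ~^d ld(t')` and `rd(t) ~^e rd(t')` on `T_n` is a product of Catalan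
numbers `C_{m₀-1} ⋯ C_{m_r-1}` with `m₀ + ⋯ + m_r = n + 1` (each `m_i ≥ 1`, `r ≥ 0`). -/
theorem stmt1 (d e n : ℕ) (hd : 1 ≤ d) (he : 1 ≤ e) (t : BTree) (ht : t.numLeaves = n + 1) :
    ∃ L : List ℕ, L ≠ [] ∧ (∀ m ∈ L, 0 < m) ∧ L.sum = n + 1 ∧
      Nat.card {t' : BTree // t'.numLeaves = n + 1 ∧ DeRel d e t t'} =
        (L.map fun m => catalan (m - 1)).prod := by
  obtain ⟨L, hL, hL1, hL2, hL3⟩ := main_aux t d e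
  refine ⟨L, hL, hL1, hL2.trans ht, ?_⟩
  rw [← hL3]
  refine Nat.card_congr (Equiv.subtypeEquivRight fun t' => ⟨fun h => h.2, fun h => ⟨?_, h⟩⟩)
  rw [← deRel_numLeaves h, ht]
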